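/- (Lemma 10, part 1: conditional type concentration.) Let X, Y be finite alphabets and G = (g_{y|x}) a stochastic matrix. For epsilon_1, epsilon_2 > 0 and x in X^d, define the conditionally typical set J_x^{epsilon_1, epsilon_2} as the set of y in Y^d such that for every letter x in X, either n_x(x)/d < epsilon_2, or for every y in Y, n_{x,y}(x,y)/n_x(x) lies in the open interval (g_{y|x} - epsilon_1, g_{y|x} + epsilon_1); here n_{x,y}(x,y) counts the positions t with (x_t, y_t) = (x,y) and n_x(x) counts positions with x_t = x. Then for every epsilon_1, epsilon_2 > 0 there exists a constant K > 0 (depending only on G, epsilon_1, epsilon_2) such that for every d >= 1 and every x in X^d, the product conditional law satisfies P_G(Y_1^d in J_x^{epsilon_1, epsilon_2} | X_1^d = x) >= 1 - |X| |Y| exp(-K d). -/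

import Mathlib

open scoped BigOperators Classical

noncomputable section

/-- `G` is a stochastic matrix. -/
def IsStochastic {X Y : Type} [Fintype X] [Fintype Y] (P : X → Y → ℝ) : Prop :=
  ∀ x, (∀ y, 0 ≤ P x y) ∧ ∑ y, P x y = 1

/-- Count `n_x(x̄)` of positions of the string `x̄` equal to the letter `a`. -/
def nxCount {X : Type} [Fintype X] [DecidableEq X] {d : ℕ} (x : Fin d → X) (a : X) : ℕ :=
  (Finset.univ.filter fun t => x t = a).card

/-- Joint count `n_{x,y}(x̄,ȳ)` of positions `t` with `(x̄ t, ȳ t) = (a,b)`. -/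
def nxyCount {X Y : Type} [Fintype X] [Fintype Y] [DecidableEq X] [DecidableEq Y]
    {d : ℕ} (x : Fin d → X) (y : Fin d → Y) (a : X) (b : Y) : ℕ :=
  (Finset.univ.filter fun t => x t = a ∧ y t = b).card

/-- The conditionally typical set `J_x^{ε₁,ε₂}`: `ȳ` is typical for `x̄` if for every
input letter `a`, either `a` is rare in `x̄` (`n_a/d < ε₂`) or every conditional
relative frequency `n_{a,b}/n_a` is within `ε₁` of `g_{b|a}`. -/
def CondTypical {X Y : Type} [Fintype X] [Fintype Y] [DecidableEq X] [DecidableEq Y]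
    (G : X → Y → ℝ) (ε1 ε2 : ℝ) {d : ℕ} (x : Fin d → X) (y : Fin d → Y) : Prop :=
  ∀ a : X, ((nxCount x a : ℝ) / d < ε2) ∨
    ∀ b : Y, (nxyCount x y a b : ℝ) / (nxCount x a) ∈
      Set.Ioo (G a b - ε1) (G a b + ε1)

/-- The moment generating function of a centred indicator is at most `exp (s ^ 2)`
for `|s| ≤ 1`. -/
theorem sum_mul_exp_indicator_sub_le {Y : Type} [Fintype Y] [DecidableEq Y] {p : Y → ℝ}
    (hp : ∀ y, 0 ≤ p y) (hsum : ∑ y, p y = 1) (b : Y) {s : ℝ} (hs : |s| ≤ 1) :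
    ∑ y, p y * Real.exp (s * ((if y = b then 1 else 0) - p b)) ≤ Real.exp (s ^ 2) := by
  have hb1 : p b ≤ 1 := hsum ▸ Finset.single_le_sum (fun y _ => hp y) (Finset.mem_univ b)
  have hexp : ∀ y, Real.exp (s * ((if y = b then 1 else 0) - p b)) ≤
      1 + s * ((if y = b then 1 else 0) - p b) + s ^ 2 := by
    intro y
    have hu : |(if y = b then (1 : ℝ) else 0) - p b| ≤ 1 := by
      have := hp b
      split_ifs <;> rw [abs_le] <;> constructor <;> linarith
    generalize (if y = b then (1 : ℝ) else 0) - p b = u at hu ⊢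
    have hz : |s * u| ≤ 1 := by
      rw [abs_mul]
      exact mul_le_one₀ hs (abs_nonneg u) hu
    have hquad := (abs_le.mp (Real.abs_exp_sub_one_sub_id_le hz)).2
    have hu2 : u ^ 2 ≤ 1 := (sq_le_one_iff_abs_le_one u).mpr hu
    nlinarith [mul_le_mul_of_nonneg_left hu2 (sq_nonneg s)]
  calc ∑ y, p y * Real.exp (s * ((if y = b then 1 else 0) - p b))
      ≤ ∑ y, p y * (1 + s * ((if y = b then 1 else 0) - p b) + s ^ 2) :=
        Finset.sum_le_sum fun y _ => mul_le_mul_of_nonneg_left (hexp y) (hp y)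
    _ = ∑ y, ((1 - s * p b + s ^ 2) * p y + s * (if y = b then p y else 0)) := by
        refine Finset.sum_congr rfl fun y _ => ?_
        split_ifs <;> ring
    _ = s ^ 2 + 1 := by
        rw [Finset.sum_add_distrib, ← Finset.mul_sum, ← Finset.mul_sum, hsum]
        simp
        ring
    _ ≤ Real.exp (s ^ 2) := Real.add_one_le_exp _

/-- The product conditional law has total mass one. -/
theorem IsStochastic.sum_prod_eq_one {X Y : Type} [Fintype X] [Fintype Y] {G : X → Y → ℝ}
    (hG : IsStochastic G) {d : ℕ} (x : Fin d → X) :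
    ∑ y : Fin d → Y, ∏ t, G (x t) (y t) = 1 := by
  rw [← Fintype.prod_sum fun t y => G (x t) y]
  simp [fun t => (hG (x t)).2]

section Concentration

variable {X Y : Type} [Fintype X] [Fintype Y] [DecidableEq X] [DecidableEq Y] {d : ℕ}

/-- The deviation of the joint count from its mean, as a sum over positions. -/
theorem nxyCount_sub_eq_sum (x : Fin d → X) (y : Fin d → Y) (a : X) (b : Y) (q : ℝ) :
    (nxyCount x y a b : ℝ) - nxCount x a * q =
      ∑ t, if x t = a then (if y t = b then 1 else 0) - q else 0 := by
  have hsplit : ∀ t, (if x t = a then (if y t = b then (1 : ℝ) else 0) - q else 0) =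
      (if x t = a ∧ y t = b then 1 else 0) - (if x t = a then 1 else 0) * q := by
    intro t
    by_cases hx : x t = a <;> simp [hx]
  simp only [hsplit, Finset.sum_sub_distrib, ← Finset.sum_mul, Finset.sum_boole, nxyCount,
    nxCount]

theorem IsStochastic.sum_prod_mul_exp_le {G : X → Y → ℝ} (hG : IsStochastic G)
    (x : Fin d → X) (a : X) (b : Y) {s : ℝ} (hs : |s| ≤ 1) :
    ∑ y : Fin d → Y, (∏ t, G (x t) (y t)) *
        Real.exp (s * ((nxyCount x y a b : ℝ) - nxCount x a * G a b)) ≤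
      Real.exp (nxCount x a * s ^ 2) := by
  simp only [nxyCount_sub_eq_sum, Finset.mul_sum, Real.exp_sum, ← Finset.prod_mul_distrib]
  rw [← Fintype.prod_sum fun t y => G (x t) y *
    Real.exp (s * if x t = a then (if y = b then 1 else 0) - G a b else 0)]
  have hcount : (nxCount x a : ℝ) * s ^ 2 = ∑ t, if x t = a then s ^ 2 else 0 := by
    rw [← Finset.sum_filter, Finset.sum_const, nsmul_eq_mul, nxCount]
  rw [hcount, Real.exp_sum]
  refine Finset.prod_le_prod
    (fun t _ => Finset.sum_nonneg fun y _ => mul_nonneg ((hG _).1 y) (Real.exp_nonneg _))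
    fun t _ => ?_
  by_cases hx : x t = a
  · simpa [hx] using sum_mul_exp_indicator_sub_le (hG a).1 (hG a).2 b hs
  · simp [hx, (hG (x t)).2]

/-- Chernoff bound for atypical strings, with the loss factor `2` of the two tails. -/
theorem IsStochastic.sum_not_condTypical_le {G : X → Y → ℝ} (hG : IsStochastic G)
    {ε1 ε2 s : ℝ} (hε2 : 0 < ε2) (hs0 : 0 < s) (hs1 : s ≤ 1) (hs : 2 * s ≤ ε1)
    (hd : 1 ≤ d) (x : Fin d → X) :
    ∑ y : Fin d → Y, (if CondTypical G ε1 ε2 x y then 0 else ∏ t, G (x t) (y t)) ≤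
      Fintype.card X * Fintype.card Y * (2 * Real.exp (-(s ^ 2 * ε2 * d))) := by
  have hd0 : (0 : ℝ) < d := by exact_mod_cast hd
  set w : (Fin d → Y) → ℝ := fun y => ∏ t, G (x t) (y t)
  have hw0 : ∀ y, 0 ≤ w y := fun y => Finset.prod_nonneg fun t _ => (hG _).1 _
  set D : (Fin d → Y) → X → Y → ℝ :=
    fun y a b => (nxyCount x y a b : ℝ) - nxCount x a * G a b with hD
  set F : (Fin d → Y) → X → Y → ℝ := fun y a b =>
    if (nxCount x a : ℝ) / d < ε2 then 0 else
      Real.exp (-(2 * s ^ 2 * nxCount x a)) *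
        (w y * Real.exp (s * D y a b) + w y * Real.exp (-s * D y a b)) with hF
  have hF0 : ∀ y a b, 0 ≤ F y a b := by
    intro y a b
    have := hw0 y
    simp only [hF]
    split_ifs <;> positivity
  have hpoint : ∀ y, (if CondTypical G ε1 ε2 x y then 0 else w y) ≤ ∑ a, ∑ b, F y a b := by
    intro y
    split_ifs with hy
    · exact Finset.sum_nonneg fun a _ => Finset.sum_nonneg fun b _ => hF0 y a b
    · simp only [CondTypical, not_forall, not_or] at hy
      obtain ⟨a, ha, b, hb⟩ := hy
      have hn : (0 : ℝ) < nxCount x a :=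
        (mul_pos hε2 hd0).trans_le ((le_div_iff₀ hd0).mp (not_lt.mp ha))
      have hdev : ε1 * nxCount x a ≤ D y a b ∨ ε1 * nxCount x a ≤ -D y a b := by
        by_contra! hcon
        refine hb ⟨(lt_div_iff₀ hn).mpr ?_, (div_lt_iff₀ hn).mpr ?_⟩ <;>
          simp only [hD] at hcon <;> linarith [hcon.1, hcon.2]
      have hthr : 2 * s ^ 2 * nxCount x a ≤ s * (ε1 * nxCount x a) := by
        nlinarith [mul_le_mul_of_nonneg_right hs (mul_pos hs0 hn).le]
      have hle : w y ≤ F y a b := by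
        simp only [hF, if_neg ha]
        rw [← mul_add, mul_left_comm]
        refine le_mul_of_one_le_right (hw0 y) ?_
        rw [mul_add, ← Real.exp_add, ← Real.exp_add]
        rcases hdev with h | h
        · have := mul_le_mul_of_nonneg_left h hs0.le
          exact le_add_of_le_of_nonneg (Real.one_le_exp (by linarith)) (Real.exp_nonneg _)
        · have := mul_le_mul_of_nonneg_left h hs0.le
          exact le_add_of_nonneg_of_le (Real.exp_nonneg _) (Real.one_le_exp (by linarith))
      exact hle.trans <|
        (Finset.single_le_sum (fun b _ => hF0 y a b) (Finset.mem_univ b)).trans <|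
        Finset.single_le_sum (f := fun a => ∑ b, F y a b)
          (fun a _ => Finset.sum_nonneg fun b _ => hF0 y a b) (Finset.mem_univ a)
  have hpair : ∀ a b, ∑ y, F y a b ≤ 2 * Real.exp (-(s ^ 2 * ε2 * d)) := by
    intro a b
    by_cases ha : (nxCount x a : ℝ) / d < ε2
    · simp only [hF, if_pos ha, Finset.sum_const_zero]
      positivity
    · simp only [hF, if_neg ha]
      rw [← Finset.mul_sum, Finset.sum_add_distrib]
      have hpos := hG.sum_prod_mul_exp_le x a b (s := s) (by rwa [abs_of_pos hs0])
      have hneg := hG.sum_prod_mul_exp_le x a b (s := -s) (by rwa [abs_neg, abs_of_pos hs0])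
      rw [neg_sq] at hneg
      have hn : ε2 * d ≤ nxCount x a := (le_div_iff₀ hd0).mp (not_lt.mp ha)
      calc _ ≤ Real.exp (-(2 * s ^ 2 * nxCount x a)) *
            (Real.exp (nxCount x a * s ^ 2) + Real.exp (nxCount x a * s ^ 2)) :=
            mul_le_mul_of_nonneg_left (add_le_add hpos hneg) (Real.exp_nonneg _)
        _ = 2 * Real.exp (-(s ^ 2 * nxCount x a)) := by
            rw [← two_mul, mul_left_comm, ← Real.exp_add]
            ring_nf
        _ ≤ 2 * Real.exp (-(s ^ 2 * ε2 * d)) := by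
            have := mul_le_mul_of_nonneg_left hn (sq_nonneg s)
            exact mul_le_mul_of_nonneg_left (Real.exp_le_exp.mpr (by linarith)) zero_le_two
  calc _ ≤ ∑ y, ∑ a, ∑ b, F y a b := Finset.sum_le_sum fun y _ => hpoint y
    _ = ∑ a, ∑ b, ∑ y, F y a b := by
        rw [Finset.sum_comm]
        exact Finset.sum_congr rfl fun a _ => Finset.sum_comm
    _ ≤ ∑ _a : X, ∑ _b : Y, 2 * Real.exp (-(s ^ 2 * ε2 * d)) :=
        Finset.sum_le_sum fun a _ => Finset.sum_le_sum fun b _ => hpair a b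
    _ = _ := by
        simp only [Finset.sum_const, Finset.card_univ, nsmul_eq_mul]
        ring

/-- Over a one-letter output alphabet every string is conditionally typical. -/
theorem IsStochastic.condTypical_of_subsingleton [Subsingleton Y] {G : X → Y → ℝ}
    (hG : IsStochastic G) {ε1 ε2 : ℝ} (hε1 : 0 < ε1) (hε2 : 0 < ε2)
    (x : Fin d → X) (y : Fin d → Y) : CondTypical G ε1 ε2 x y := by
  intro a
  rcases (nxCount x a).eq_zero_or_pos with h0 | hpos
  · left
    simpa [h0] using hε2
  · right
    intro b
    have hGab : G a b = 1 := by
      rw [← (hG a).2, Fintype.sum_subsingleton _ b]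
    have hcount : nxyCount x y a b = nxCount x a := by
      simp [nxyCount, nxCount, Subsingleton.elim _ b]
    have hne : (nxCount x a : ℝ) ≠ 0 := by exact_mod_cast hpos.ne'
    rw [hcount, div_self hne, hGab]
    constructor <;> linarith

end Concentration

/-- **Lemma 10, part 1 (conditional type concentration).**  For every stochastic matrix
`G` and `ε₁, ε₂ > 0` there is a constant `K > 0` such that for every `d ≥ 1` and every
input string `x ∈ X^d`, the product conditional law of `G` gives the conditionally
typical set probability at least `1 - |X||Y| exp(-K d)`. -/
theorem conditional_type_concentration
    {X Y : Type} [Fintype X] [Fintype Y] [DecidableEq X] [DecidableEq Y]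
    (G : X → Y → ℝ) (hG : IsStochastic G)
    (ε1 ε2 : ℝ) (hε1 : 0 < ε1) (hε2 : 0 < ε2) :
    ∃ K : ℝ, 0 < K ∧ ∀ d : ℕ, 1 ≤ d → ∀ x : Fin d → X,
      1 - (Fintype.card X : ℝ) * (Fintype.card Y : ℝ) * Real.exp (-K * d) ≤
        ∑ y : Fin d → Y, (if CondTypical G ε1 ε2 x y then ∏ t, G (x t) (y t) else 0) := by
  set s : ℝ := min 1 (ε1 / 2)
  have hs0 : 0 < s := lt_min one_pos (half_pos hε1)
  have hs1 : s ≤ 1 := min_le_left _ _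
  have hsε : 2 * s ≤ ε1 := by linarith [min_le_right 1 (ε1 / 2)]
  refine ⟨s ^ 2 * ε2 / 2, by positivity, fun d hd x => ?_⟩
  have hmass := hG.sum_prod_eq_one x
  rcases subsingleton_or_nontrivial Y with hY | hY
  · simp only [hG.condTypical_of_subsingleton hε1 hε2 x, if_true, hmass]
    linarith [show 0 ≤ (Fintype.card X : ℝ) * Fintype.card Y *
      Real.exp (-(s ^ 2 * ε2 / 2) * d) by positivity]
  have hcardX : (1 : ℝ) ≤ Fintype.card X := by
    exact_mod_cast Fintype.card_pos_iff.mpr ⟨x ⟨0, hd⟩⟩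
  have hcardY : (2 : ℝ) ≤ Fintype.card Y := by
    exact_mod_cast Fintype.one_lt_card (α := Y)
  have hN : (2 : ℝ) ≤ Fintype.card X * Fintype.card Y := by nlinarith
  have hw0 : ∀ y : Fin d → Y, 0 ≤ ∏ t, G (x t) (y t) :=
    fun y => Finset.prod_nonneg fun t _ => (hG _).1 _
  have hbad := hG.sum_not_condTypical_le hε2 hs0 hs1 hsε hd x
  have hsplit : ∑ y : Fin d → Y, (if CondTypical G ε1 ε2 x y then ∏ t, G (x t) (y t) else 0) +
      ∑ y : Fin d → Y, (if CondTypical G ε1 ε2 x y then 0 else ∏ t, G (x t) (y t)) = 1 := by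
    rw [← hmass, ← Finset.sum_add_distrib]
    refine Finset.sum_congr rfl fun y _ => ?_
    split_ifs <;> simp
  have hgood : 0 ≤ ∑ y : Fin d → Y,
      (if CondTypical G ε1 ε2 x y then ∏ t, G (x t) (y t) else 0) :=
    Finset.sum_nonneg fun y _ => by split_ifs <;> simp [hw0]
  -- Halving the exponent absorbs the factor `2`, unless the claimed bound is trivial.
  have hsqrt : Real.exp (-(s ^ 2 * ε2 * d)) = Real.exp (-(s ^ 2 * ε2 / 2) * d) ^ 2 := by
    rw [← Real.exp_nat_mul]
    push_cast
    ring_nf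
  rw [hsqrt] at hbad
  have hv0 := Real.exp_pos (-(s ^ 2 * ε2 / 2) * d)
  generalize Real.exp (-(s ^ 2 * ε2 / 2) * d) = v at hbad hv0 ⊢
  rcases le_total v (1 / 2) with hv | hv
  · have hv2 : 2 * v ^ 2 ≤ v := by nlinarith
    linarith [mul_le_mul_of_nonneg_left hv2 (zero_le_two.trans hN)]
  · nlinarith

end
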